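/- For every integer r ≥ 1, the following identity holds in ℚ(q): 2·(q−1)^r q^(2r) I E/(q^2 G) − (q−1)^r I E/G + S1 + S2 + S3 = (1/3)(q^2+q+1)^r (q−1)^2 q^3 (q+1) + (q^2+q+1)(2q^(2r)−q^2)(q−1)^(2r) q^r (q+1)^r − (1/3)(q−1)^(2r)(q+1)(q^2+q+1)(3q^(3r) − 3q^(r+2) + q^3), where E = q^8−q^6−q^5+q^3, G = (q^2−1)(q^2−q), I = (q^3−q)^r − (1/2)(q^2−q)(q+1)^r − (1/2)(q^2+q)(q−1)^r − (q^(r−1)−1)(q−1)^(r−1)(q^3−q), S1 = 3^r(1 + (1+q+q^2)(q^(3r+1) + q^(3r) − 2q^(2r+1) + q − 1)), S2 = ((q−1)^r − 3^r)(q^2+q+1)(3q^(3r+1) + 3q^(3r) − 2q^(2r+2) − 4q^(2r+1) + q^3), and S3 = (2·3^r − 3(q−1)^r + (q−1)^(2r))(q+1)(q^2+q+1)(q^r−q)(q^2 + q^(2r) − q^(r+1)) + (2·3^r − 2(q−1)^r + (q−1)^(2r) − (q^2−1)^r)·q·(q^2+q+1)(q^r−q)(q^r−q^2) + (2·3^r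 − 4(q−1)^r + (q−1)^(2r) + (q^2−1)^r)·q^2·(q^2+q+1)(q^r−1)(q^r−q) + (1/6)q^3((q−1)^(2r) − 3(q^2−1)^r + 2(q^2+q+1)^r + 2q(q+1)(3^(r+1) − 3(q−1)^r + (q−1)^(2r) − (q^2+q+1)^r)) + (1/6)q^6(−6(q−1)^r + (q−1)^(2r) + 3(q^2−1)^r + 2(q^2+q+1)^r). (This is the computation of the E-polynomial of the space of reducible representations of F_r in SL(3,ℂ) as a sum of strata.) -/

import Mathlib

/-- The variable `q`, viewed as a rational function in `ℚ(q)`. -/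
noncomputable def q : RatFunc ℚ := RatFunc.X

/-- `E = e(SL(3,ℂ))`. -/
noncomputable def E : RatFunc ℚ := q^8 - q^6 - q^5 + q^3

/-- `G = e(GL(2,ℂ))`. -/
noncomputable def G : RatFunc ℚ := (q^2 - 1) * (q^2 - q)

/-- `I = e(R^irr_{r,2})`, the E-polynomial of the space of irreducible
representations of `F_r` in `SL(2,ℂ)`. -/
noncomputable def I (r : ℕ) : RatFunc ℚ :=
  (q^3 - q)^r - (1/2) * (q^2 - q) * (q + 1)^r - (1/2) * (q^2 + q) * (q - 1)^r
    - (q^(r-1) - 1) * (q - 1)^(r-1) * (q^3 - q)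

/-- `S1 = e(R_1)`. -/
noncomputable def S1 (r : ℕ) : RatFunc ℚ :=
  3^r * (1 + (1 + q + q^2) * (q^(3*r+1) + q^(3*r) - 2 * q^(2*r+1) + q - 1))

/-- `S2 = e(R_2)`. -/
noncomputable def S2 (r : ℕ) : RatFunc ℚ :=
  ((q - 1)^r - 3^r) * (q^2 + q + 1)
    * (3 * q^(3*r+1) + 3 * q^(3*r) - 2 * q^(2*r+2) - 4 * q^(2*r+1) + q^3)

/-- `S3 = e(R_3)`. -/
noncomputable def S3 (r : ℕ) : RatFunc ℚ :=
  (2 * 3^r - 3 * (q - 1)^r + (q - 1)^(2*r)) * (q + 1) * (q^2 + q + 1)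
      * (q^r - q) * (q^2 + q^(2*r) - q^(r+1))
    + (2 * 3^r - 2 * (q - 1)^r + (q - 1)^(2*r) - (q^2 - 1)^r) * q
      * (q^2 + q + 1) * (q^r - q) * (q^r - q^2)
    + (2 * 3^r - 4 * (q - 1)^r + (q - 1)^(2*r) + (q^2 - 1)^r) * q^2
      * (q^2 + q + 1) * (q^r - 1) * (q^r - q)
    + (1/6) * q^3 * ((q - 1)^(2*r) - 3 * (q^2 - 1)^r + 2 * (q^2 + q + 1)^r
        + 2 * q * (q + 1)
          * (3^(r+1) - 3 * (q - 1)^r + (q - 1)^(2*r) - (q^2 + q + 1)^r))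
    + (1/6) * q^6 * (-6 * (q - 1)^r + (q - 1)^(2*r) + 3 * (q^2 - 1)^r
        + 2 * (q^2 + q + 1)^r)

theorem qm1_ne : q - 1 ≠ 0 := by
  intro h
  have h1 : (RatFunc.X : RatFunc ℚ) = 1 := by simpa [q] using sub_eq_zero.mp h
  rw [← RatFunc.algebraMap_X, ← map_one (algebraMap (Polynomial ℚ) (RatFunc ℚ))] at h1
  have h2 := RatFunc.algebraMap_injective ℚ h1
  have := congrArg (Polynomial.eval 0) h2
  simp at this

theorem qp1_ne : q + 1 ≠ 0 := by
  intro h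
  have h1 : (RatFunc.X : RatFunc ℚ) + 1 = 0 := by simpa [q] using h
  rw [← RatFunc.algebraMap_X, ← map_one (algebraMap (Polynomial ℚ) (RatFunc ℚ)),
    ← map_add, ← map_zero (algebraMap (Polynomial ℚ) (RatFunc ℚ))] at h1
  have h2 := RatFunc.algebraMap_injective ℚ h1
  have := congrArg (Polynomial.eval 0) h2
  simp at this

theorem q_ne : q ≠ 0 := RatFunc.X_ne_zero

theorem E_eq : E = q^2 * (q^2 + q + 1) * G := by
  unfold E G; ring

theorem G_ne : G ≠ 0 := by
  have h : G = (q - 1)^2 * (q + 1) * q := by unfold G; ring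
  rw [h]
  exact mul_ne_zero (mul_ne_zero (pow_ne_zero _ qm1_ne) qp1_ne) q_ne

/-- The E-polynomial of the space of reducible representations of `F_r` in
`SL(3,ℂ)`, computed as a sum of strata. -/
theorem e_reducible_representations_sl3 (r : ℕ) (hr : 1 ≤ r) :
    2 * (q - 1)^r * q^(2*r) * I r * E / (q^2 * G) - (q - 1)^r * I r * E / G
      + S1 r + S2 r + S3 r
    = (1/3) * (q^2 + q + 1)^r * (q - 1)^2 * q^3 * (q + 1)
      + (q^2 + q + 1) * (2 * q^(2*r) - q^2) * (q - 1)^(2*r) * q^r * (q + 1)^r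
      - (1/3) * (q - 1)^(2*r) * (q + 1) * (q^2 + q + 1)
          * (3 * q^(3*r) - 3 * q^(r+2) + q^3) := by
  obtain ⟨n, rfl⟩ : ∃ n, r = n + 1 := ⟨r - 1, by omega⟩
  have hG := G_ne
  have hq := q_ne
  have e1 : ∀ x : RatFunc ℚ, x * E / (q^2 * G) = x * (q^2 + q + 1) := by
    intro x; rw [E_eq]; field_simp
  have e2 : ∀ x : RatFunc ℚ, x * E / G = x * (q^2 * (q^2 + q + 1)) := by
    intro x; rw [E_eq]; field_simp
  rw [e1, e2]
  have f1 : (q^3 - q)^(n+1) = q^(n+1) * (q-1)^(n+1) * (q+1)^(n+1) := by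
    rw [← mul_pow, ← mul_pow]; congr 1; ring
  have f2 : (q^2 - 1)^(n+1) = (q-1)^(n+1) * (q+1)^(n+1) := by
    rw [← mul_pow]; congr 1; ring
  unfold I S1 S2 S3
  rw [f1, f2, Nat.add_sub_cancel]
  have g : ∀ x : RatFunc ℚ, x^(2*(n+1)) = (x^n)^2 * x^2 := by intro x; ring
  have g3 : ∀ x : RatFunc ℚ, x^(3*(n+1)) = (x^n)^3 * x^3 := by intro x; ring
  simp only [pow_succ _ (3*(n+1)), pow_succ _ (2*(n+1)), pow_add _ (2*(n+1)) 2,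
    pow_succ _ (n+1), pow_add _ (n+1) 2, g, g3, pow_succ _ n]
  generalize q^n = a
  generalize (q-1)^n = b
  generalize (q+1)^n = c
  generalize (q^2+q+1)^n = d
  generalize (3:RatFunc ℚ)^n = t
  generalize q = x
  ring
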